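/- Let F be a valued (t,n)-family with valuation (a_1,...,a_n). The number of exclusive pairs of F equals ∑_{1 ≤ i < j ≤ n} a_i·a_j if and only if |A_i ∩ A_j| = t for all i ≠ j (equivalently |⋂_{i∈I} A_i| = t for all |I| ≥ 2). -/

import Mathlib

open Finset

/-- Number of SDRs of the family `A`. -/
def numSDR {n : ℕ} (A : Fin n → Finset ℕ) : ℕ :=
  ((Fintype.piFinset A).filter Function.Injective).card

/-- `(t,n)`-family: every nonempty union of `k` sets has at least `k + t` elements. -/
def IsTNFamily (t : ℕ) {n : ℕ} (A : Fin n → Finset ℕ) : Prop :=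
  ∀ I : Finset (Fin n), I.Nonempty → I.card + t ≤ (I.biUnion A).card

/-- Valued `(t,n)`-family with valuation `a`. -/
def IsValuedTN (t : ℕ) {n : ℕ} (a : Fin n → ℕ) (A : Fin n → Finset ℕ) : Prop :=
  (∀ i, 0 < a i) ∧ (∀ i, (A i).card = a i + t) ∧
    ∀ I : Finset (Fin n), 2 ≤ I.card → (∑ i ∈ I, a i) + t ≤ (I.biUnion A).card

/-- `I_x = {i : x ∈ A_i}`. -/
def Ix {n : ℕ} (A : Fin n → Finset ℕ) (x : ℕ) : Finset (Fin n) :=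
  Finset.univ.filter fun i => x ∈ A i

/-- `{x,y}` is exclusive. -/
def Exclusive {n : ℕ} (A : Fin n → Finset ℕ) (x y : ℕ) : Prop :=
  (Ix A x \ Ix A y).Nonempty ∧ (Ix A y \ Ix A x).Nonempty

/-- `{x,y}` is saturated. -/
def Saturated (t : ℕ) {n : ℕ} (a : Fin n → ℕ) (A : Fin n → Finset ℕ) (x y : ℕ) : Prop :=
  ∃ I : Finset (Fin n),
    I ∩ Ix A x ∩ Ix A y = ∅ ∧ (I ∩ (Ix A x \ Ix A y)).Nonempty ∧
    (I ∩ (Ix A y \ Ix A x)).Nonempty ∧ (I.biUnion A).card = (∑ i ∈ I, a i) + t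

/-- The modified family `F_y^x`: replace `x` by `y` in each `A_i` with `i ∈ I_x ∩ I_y^c`. -/
def swapFam {n : ℕ} (A : Fin n → Finset ℕ) (x y : ℕ) : Fin n → Finset ℕ :=
  fun i => if x ∈ A i ∧ y ∉ A i then insert y (A i \ {x}) else A i

def U (t n : ℕ) : ℕ := ∑ j ∈ Finset.range (t + 1), t.choose j * n.choose j * j.factorial

/-- The extremal family `F*`: `A_i* = {i} ∪ {n+1, …, n+t}` (index `i : Fin n` stands for `i+1`). -/
def Astar (t n : ℕ) : Fin n → Finset ℕ := fun i => insert ((i : ℕ) + 1) (Finset.Ioc n (n + t))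

/-- `∑_{i < j} a_i a_j`. -/
def pairSum {n : ℕ} (a : Fin n → ℕ) : ℕ :=
  ∑ p ∈ Finset.univ.filter (fun p : Fin n × Fin n => p.1 < p.2), a p.1 * a p.2

/-- Elementary symmetric polynomial `e_k(a_1,…,a_n)`. -/
def esymm {n : ℕ} (a : Fin n → ℕ) (k : ℕ) : ℕ :=
  ∑ S ∈ Finset.univ.powersetCard k, ∏ i ∈ S, a i

section Aux
open scoped Classical

def Cm {n : ℕ} (A : Fin n → Finset ℕ) (x y : ℕ) : Prop := Ix A x ⊆ Ix A y ∨ Ix A y ⊆ Ix A x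

theorem mem_Ix' {n : ℕ} (A : Fin n → Finset ℕ) (x : ℕ) (i : Fin n) : i ∈ Ix A x ↔ x ∈ A i := by
  simp [Ix]

theorem excl_iff {n : ℕ} (A : Fin n → Finset ℕ) (x y : ℕ) : Exclusive A x y ↔ ¬ Cm A x y := by
  unfold Exclusive Cm
  rw [Finset.sdiff_nonempty, Finset.sdiff_nonempty]
  tauto

theorem Cm_symm {n : ℕ} {A : Fin n → Finset ℕ} {x y : ℕ} : Cm A x y ↔ Cm A y x := by
  unfold Cm; tauto

noncomputable def comp {n : ℕ} (A : Fin n → Finset ℕ) (X Y : Finset ℕ) : ℕ :=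
  ((X ×ˢ Y).filter (fun p => Cm A p.1 p.2)).card

theorem comp_eq_sum {n : ℕ} (A : Fin n → Finset ℕ) (X Y : Finset ℕ) :
    comp A X Y = ∑ x ∈ X, (Y.filter (fun y => Cm A x y)).card := by
  unfold comp
  rw [Finset.card_filter, Finset.sum_product]
  simp_rw [Finset.card_filter]

theorem comp_comm {n : ℕ} (A : Fin n → Finset ℕ) (X Y : Finset ℕ) :
    comp A X Y = comp A Y X := by
  unfold comp
  rw [Finset.card_filter, Finset.card_filter, Finset.sum_product, Finset.sum_product_right]
  simp only [Cm_symm]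

theorem comp_union {n : ℕ} (A : Fin n → Finset ℕ) {X X' : Finset ℕ} (h : Disjoint X X')
    (Y : Finset ℕ) : comp A (X ∪ X') Y = comp A X Y + comp A X' Y := by
  simp only [comp_eq_sum]
  exact Finset.sum_union h

theorem comp_union' {n : ℕ} (A : Fin n → Finset ℕ) {X X' : Finset ℕ} (h : Disjoint X X')
    (Y : Finset ℕ) : comp A Y (X ∪ X') = comp A Y X + comp A Y X' := by
  rw [comp_comm, comp_union A h, comp_comm A X, comp_comm A X']

theorem two_ex {n : ℕ} (A : Fin n → Finset ℕ) (X : Finset ℕ) :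
    2 * ((X ×ˢ X).filter (fun p => p.1 < p.2 ∧ Exclusive A p.1 p.2)).card + comp A X X
      = X.card ^ 2 := by
  have h1 : ((X ×ˢ X).filter (fun p => p.1 < p.2 ∧ Exclusive A p.1 p.2)).card
      = ((X ×ˢ X).filter (fun p => p.2 < p.1 ∧ Exclusive A p.1 p.2)).card := by
    apply Finset.card_bij (fun p _ => (p.2, p.1))
    · intro p hp
      simp only [Finset.mem_filter, Finset.mem_product] at hp ⊢
      refine ⟨⟨hp.1.2, hp.1.1⟩, hp.2.1, hp.2.2.2, hp.2.2.1⟩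
    · rintro ⟨a, b⟩ _ ⟨c, d⟩ _ h
      simp only [Prod.mk.injEq] at h ⊢
      tauto
    · intro p hp
      simp only [Finset.mem_filter, Finset.mem_product] at hp
      refine ⟨(p.2, p.1), ?_, rfl⟩
      simp only [Finset.mem_filter, Finset.mem_product]
      exact ⟨⟨hp.1.2, hp.1.1⟩, hp.2.1, hp.2.2.2, hp.2.2.1⟩
  rw [two_mul]
  nth_rewrite 2 [h1]
  rw [pow_two, ← Finset.card_product]
  unfold comp
  rw [Finset.card_filter, Finset.card_filter, Finset.card_filter, Finset.card_eq_sum_ones,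
    ← Finset.sum_add_distrib, ← Finset.sum_add_distrib]
  refine Finset.sum_congr rfl ?_
  rintro ⟨x, y⟩ _
  simp only [excl_iff]
  by_cases hc : Cm A x y
  · simp [hc]
  · have : x ≠ y := by
      rintro rfl
      exact hc (Or.inl (Finset.Subset.refl _))
    rcases lt_or_gt_of_ne this with h | h
    · simp [hc, h, h.not_gt]
    · simp [hc, h, h.not_gt]

theorem two_pairSum {n : ℕ} (a : Fin n → ℕ) :
    2 * pairSum a + ∑ i, a i ^ 2 = (∑ i, a i) ^ 2 := by
  have h1 : pairSum a = ∑ p ∈ Finset.univ.filter (fun p : Fin n × Fin n => p.2 < p.1),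
      a p.1 * a p.2 := by
    unfold pairSum
    apply Finset.sum_bij (fun p _ => (p.2, p.1))
    · intro p hp
      simpa using hp
    · rintro ⟨a, b⟩ _ ⟨c, d⟩ _ h
      simp only [Prod.mk.injEq] at h ⊢
      tauto
    · intro p hp
      exact ⟨(p.2, p.1), by simpa using hp, rfl⟩
    · intro p _
      exact Nat.mul_comm _ _
  have h3 : ∑ i, a i ^ 2 = ∑ p : Fin n × Fin n, if p.1 = p.2 then a p.1 * a p.2 else 0 := by
    rw [Fintype.sum_prod_type]
    simp [pow_two]
  rw [two_mul]
  nth_rewrite 2 [h1]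
  unfold pairSum
  rw [Finset.sum_filter, Finset.sum_filter, h3, ← Finset.sum_add_distrib,
    ← Finset.sum_add_distrib, pow_two, Finset.sum_mul_sum, ← Finset.sum_product']
  refine Finset.sum_congr rfl ?_
  rintro ⟨x, y⟩ _
  rcases lt_trichotomy x y with h | h | h
  · simp [h, h.not_gt, h.ne]
  · simp [h]
  · simp [h, h.not_gt, h.ne']

/-- Upper bound for comparable pairs among elements of degree at least two. -/
theorem comp_bound {n : ℕ} (A : Fin n → Finset ℕ) (t : ℕ)
    (hA : ∀ i j, i ≠ j → (A i ∩ A j).card ≤ t) (m : ℕ) (hm : t ≤ m) (V : Finset ℕ)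
    (hV : V.card = m) (h2 : ∀ x ∈ V, 2 ≤ (Ix A x).card) :
    (comp A V V : ℤ) ≤ 2 * m * t - m - t ^ 2 + t := by
  induction m, hm using Nat.le_induction generalizing V with
  | base =>
    have : comp A V V ≤ t * t := by
      unfold comp
      refine (Finset.card_filter_le _ _).trans ?_
      rw [Finset.card_product, hV]
    have h : (comp A V V : ℤ) ≤ t * t := by exact_mod_cast this
    nlinarith
  | succ m hm ih =>
    have hne : V.Nonempty := by rw [← Finset.card_pos]; omega
    obtain ⟨x, hx, hmin⟩ := Finset.exists_min_image V (fun x => (Ix A x).card) hne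
    have hVe : V.card = (V.erase x).card + 1 := by rw [Finset.card_erase_add_one hx]
    have ih' := ih (V.erase x) (by omega) (fun y hy => h2 y (Finset.mem_of_mem_erase hy))
    have hU : V = {x} ∪ V.erase x := by
      rw [← Finset.insert_eq, Finset.insert_erase hx]
    have hd : Disjoint {x} (V.erase x) := by simp
    have e1 : comp A V V = comp A {x} V + comp A (V.erase x) V := by
      conv_lhs => rw [hU]
      rw [comp_union A hd, ← hU]
    have e2 : comp A (V.erase x) V = comp A {x} (V.erase x) + comp A (V.erase x) (V.erase x) := by
      rw [comp_comm A {x}, ← comp_union' A hd, ← hU]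
    have e3 : comp A {x} V = comp A {x} {x} + comp A {x} (V.erase x) := by
      rw [← comp_union' A hd, ← hU]
    have e4 : comp A {x} {x} = 1 := by
      unfold comp
      rw [Finset.filter_true_of_mem]
      · simp
      · intro p hp
        simp only [Finset.mem_product, Finset.mem_singleton] at hp
        left
        rw [hp.1, hp.2]
    have e5 : comp A {x} V ≤ t := by
      rw [comp_eq_sum, Finset.sum_singleton]
      obtain ⟨i, hi, j, hj, hij⟩ := Finset.one_lt_card.1 (h2 x hx)
      refine le_trans (Finset.card_le_card ?_) (hA i j hij)
      intro y hy
      rw [Finset.mem_filter] at hy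
      have hs : Ix A x ⊆ Ix A y := by
        rcases hy.2 with h | h
        · exact h
        · exact (Finset.eq_of_subset_of_card_le h (hmin y hy.1)).ge
      rw [Finset.mem_inter, ← mem_Ix', ← mem_Ix']
      exact ⟨hs hi, hs hj⟩
    push_cast
    have e6 : (comp A V V : ℤ) = 2 * comp A {x} V - 1 + comp A (V.erase x) (V.erase x) := by
      have : comp A V V + 1 = 2 * comp A {x} V + comp A (V.erase x) (V.erase x) := by omega
      have h : (comp A V V : ℤ) + 1 = 2 * comp A {x} V + comp A (V.erase x) (V.erase x) := by
        exact_mod_cast this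
      linarith
    have e7 : (comp A {x} V : ℤ) ≤ t := by exact_mod_cast e5
    rw [e6]
    nlinarith

/-- Elements lying in at least two of the sets. -/
noncomputable def VV {n : ℕ} (A : Fin n → Finset ℕ) : Finset ℕ :=
  (Finset.univ.biUnion A).filter (fun x => 2 ≤ (Ix A x).card)

/-- Elements lying only in `A i`. -/
noncomputable def SS {n : ℕ} (A : Fin n → Finset ℕ) (i : Fin n) : Finset ℕ :=
  (A i).filter (fun x => Ix A x = {i})

theorem mem_SS {n : ℕ} (A : Fin n → Finset ℕ) (i : Fin n) (x : ℕ) :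
    x ∈ SS A i ↔ Ix A x = {i} := by
  unfold SS
  rw [Finset.mem_filter]
  refine ⟨fun h => h.2, fun h => ⟨?_, h⟩⟩
  rw [← mem_Ix', h]; simp

theorem mem_VV {n : ℕ} (A : Fin n → Finset ℕ) (x : ℕ) :
    x ∈ VV A ↔ 2 ≤ (Ix A x).card := by
  unfold VV
  rw [Finset.mem_filter]
  refine ⟨fun h => h.2, fun h => ⟨?_, h⟩⟩
  obtain ⟨i, hi⟩ := Finset.card_pos.1 (show 0 < (Ix A x).card by omega)
  rw [mem_Ix'] at hi
  simp only [Finset.mem_biUnion, Finset.mem_univ, true_and]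
  exact ⟨i, hi⟩

theorem SS_disj {n : ℕ} (A : Fin n → Finset ℕ) (i j : Fin n) (h : i ≠ j) :
    Disjoint (SS A i) (SS A j) := by
  rw [Finset.disjoint_left]
  intro x hx hy
  rw [mem_SS] at hx hy
  rw [hx, Finset.singleton_inj] at hy
  exact h hy

theorem mem_or {n : ℕ} (A : Fin n → Finset ℕ) (i : Fin n) (x : ℕ) (hx : x ∈ A i) :
    x ∈ SS A i ∨ x ∈ VV A := by
  rw [mem_SS, mem_VV]
  rw [← mem_Ix'] at hx
  by_cases h : 2 ≤ (Ix A x).card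
  · exact Or.inr h
  · left
    symm
    apply Finset.eq_of_subset_of_card_le
    · simpa using hx
    · simp; omega

theorem disj_V {n : ℕ} (A : Fin n → Finset ℕ) :
    Disjoint (VV A) (Finset.univ.biUnion (SS A)) := by
  rw [Finset.disjoint_left]
  intro x hx hy
  rw [mem_VV] at hx
  simp only [Finset.mem_biUnion, Finset.mem_univ, true_and, mem_SS] at hy
  obtain ⟨i, hi⟩ := hy
  rw [hi] at hx
  simp at hx

theorem U_eq {n : ℕ} (A : Fin n → Finset ℕ) :
    Finset.univ.biUnion A = VV A ∪ Finset.univ.biUnion (SS A) := by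
  ext x
  simp only [Finset.mem_union, Finset.mem_biUnion, Finset.mem_univ, true_and]
  constructor
  · rintro ⟨i, hi⟩
    rcases mem_or A i x hi with h | h
    · exact Or.inr ⟨i, h⟩
    · exact Or.inl h
  · rintro (h | ⟨i, hi⟩)
    · simpa using (Finset.mem_filter.1 h).1
    · exact ⟨i, (Finset.mem_filter.1 hi).1⟩

theorem card_T {n : ℕ} (A : Fin n → Finset ℕ) :
    (Finset.univ.biUnion (SS A)).card = ∑ i, (SS A i).card :=
  Finset.card_biUnion fun i _ j _ h => SS_disj A i j h

theorem card_U {n : ℕ} (A : Fin n → Finset ℕ) :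
    (Finset.univ.biUnion A).card = (VV A).card + ∑ i, (SS A i).card := by
  rw [U_eq, Finset.card_union_of_disjoint (disj_V A), card_T]

theorem card_A {n : ℕ} (A : Fin n → Finset ℕ) (i : Fin n) :
    (A i).card = (SS A i).card + (A i ∩ VV A).card := by
  rw [← Finset.card_union_of_disjoint]
  · congr 1
    ext x
    rw [Finset.mem_union, Finset.mem_inter]
    constructor
    · intro h
      rcases mem_or A i x h with h' | h'
      · exact Or.inl h'
      · exact Or.inr ⟨h, h'⟩
    · rintro (h | h)
      · exact (Finset.mem_filter.1 h).1
      · exact h.1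
  · rw [Finset.disjoint_left]
    intro x hx hy
    rw [mem_SS] at hx
    rw [Finset.mem_inter, mem_VV, hx] at hy
    simp at hy

theorem comp_T {n : ℕ} (A : Fin n → Finset ℕ) (Y : Finset ℕ) (hY : Y ⊆ Finset.univ.biUnion A) :
    comp A (Finset.univ.biUnion (SS A)) Y = ∑ i, (SS A i).card * (Y ∩ A i).card := by
  rw [comp_eq_sum, Finset.sum_biUnion (fun i _ j _ h => SS_disj A i j h)]
  refine Finset.sum_congr rfl fun i _ => ?_
  rw [← smul_eq_mul, ← Finset.sum_const]
  refine Finset.sum_congr rfl fun x hx => ?_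
  congr 1
  ext y
  rw [mem_SS] at hx
  rw [Finset.mem_filter, Finset.mem_inter]
  refine and_congr_right fun hy => ?_
  have hy' := hY hy
  simp only [Finset.mem_biUnion, Finset.mem_univ, true_and] at hy'
  obtain ⟨j, hj⟩ := hy'
  rw [← mem_Ix'] at hj ⊢
  unfold Cm
  rw [hx, Finset.singleton_subset_iff]
  constructor
  · rintro (h | h)
    · exact h
    · have := h hj
      rw [Finset.mem_singleton] at this
      rwa [← this]
  · exact Or.inl

theorem comp_main {n : ℕ} (A : Fin n → Finset ℕ) :
    comp A (Finset.univ.biUnion A) (Finset.univ.biUnion A) + ∑ i, (SS A i).card ^ 2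
      = comp A (VV A) (VV A) + 2 * ∑ i, (SS A i).card * (A i).card := by
  have hT : Finset.univ.biUnion (SS A) ⊆ Finset.univ.biUnion A := by
    rw [U_eq A]; exact Finset.subset_union_right
  have h1 := comp_T A _ (Finset.Subset.refl _)
  have h2 := comp_T A _ hT
  have e1 : ∑ i, (SS A i).card * (Finset.univ.biUnion A ∩ A i).card
      = ∑ i, (SS A i).card * (A i).card := by
    refine Finset.sum_congr rfl fun i _ => ?_
    rw [Finset.inter_eq_right.2 (Finset.subset_biUnion_of_mem A (Finset.mem_univ i))]
  have e2 : ∑ i, (SS A i).card * (Finset.univ.biUnion (SS A) ∩ A i).card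
      = ∑ i, (SS A i).card ^ 2 := by
    refine Finset.sum_congr rfl fun i _ => ?_
    rw [pow_two]
    congr 2
    ext x
    simp only [Finset.mem_inter, Finset.mem_biUnion, Finset.mem_univ, true_and]
    constructor
    · rintro ⟨⟨j, hj⟩, hx⟩
      rw [← mem_Ix'] at hx
      have hj' := hj
      rw [mem_SS] at hj
      rw [hj, Finset.mem_singleton] at hx
      rwa [hx]
    · intro h
      exact ⟨⟨i, h⟩, (Finset.mem_filter.1 h).1⟩
  rw [e1] at h1
  rw [e2] at h2
  have h3 : comp A (Finset.univ.biUnion A) (Finset.univ.biUnion A)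
      = comp A (VV A) (Finset.univ.biUnion A)
        + comp A (Finset.univ.biUnion (SS A)) (Finset.univ.biUnion A) := by
    rw [← comp_union A (disj_V A), ← U_eq]
  have h4 : comp A (VV A) (Finset.univ.biUnion A)
      = comp A (VV A) (VV A) + comp A (Finset.univ.biUnion (SS A)) (VV A) := by
    rw [comp_comm, U_eq, comp_union A (disj_V A)]
  have h5 : comp A (Finset.univ.biUnion (SS A)) (Finset.univ.biUnion A)
      = comp A (Finset.univ.biUnion (SS A)) (VV A)
        + comp A (Finset.univ.biUnion (SS A)) (Finset.univ.biUnion (SS A)) := by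
    rw [comp_comm, U_eq, comp_union A (disj_V A), comp_comm A (VV A)]
  omega

/-- The numerical identity behind the theorem. -/
theorem key {n : ℕ} (t : ℕ) (a : Fin n → ℕ) (A : Fin n → Finset ℕ)
    (hc : ∀ i, (A i).card = a i + t) :
    (2 * (((((Finset.univ.biUnion A) ×ˢ (Finset.univ.biUnion A)).filter
        (fun p => p.1 < p.2 ∧ Exclusive A p.1 p.2)).card : ℤ) - pairSum a))
      = (((Finset.univ.biUnion A).card : ℤ) - t) ^ 2 - (∑ i, (a i : ℤ)) ^ 2
        + ∑ i, ((a i : ℤ) - (SS A i).card) ^ 2 + 2 * t * (VV A).card - t ^ 2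
        - comp A (VV A) (VV A) := by
  have h1 := two_ex A (Finset.univ.biUnion A)
  have h2 := two_pairSum a
  have h3 := comp_main A
  have h4 := card_U A
  simp only [hc] at h3
  generalize (((Finset.univ.biUnion A) ×ˢ (Finset.univ.biUnion A)).filter
        (fun p => p.1 < p.2 ∧ Exclusive A p.1 p.2)).card = E at h1 ⊢
  zify at h1 h2 h3 h4
  have e1 : ∑ i, ((a i : ℤ) - (SS A i).card) ^ 2 = ∑ i, (a i : ℤ) ^ 2
      - 2 * ∑ i, ((SS A i).card : ℤ) * (a i + t) + 2 * t * ∑ i, ((SS A i).card : ℤ)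
      + ∑ i, ((SS A i).card : ℤ) ^ 2 := by
    rw [Finset.mul_sum, Finset.mul_sum, ← Finset.sum_sub_distrib, ← Finset.sum_add_distrib,
      ← Finset.sum_add_distrib]
    refine Finset.sum_congr rfl fun i _ => ?_
    ring
  rw [e1]
  have h4' : 2 * (t : ℤ) * (Finset.univ.biUnion A).card
    = 2 * t * (VV A).card + 2 * t * ∑ i, ((SS A i).card : ℤ) := by rw [h4]; ring
  linarith [h1, h2, h3, h4']

theorem fwd {n : ℕ} (t : ℕ) (a : Fin n → ℕ) (A : Fin n → Finset ℕ)
    (hF : IsValuedTN t a A) (hn : 2 ≤ n)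
    (hex : (((Finset.univ.biUnion A) ×ˢ (Finset.univ.biUnion A)).filter
        (fun p => p.1 < p.2 ∧ Exclusive A p.1 p.2)).card = pairSum a) (i j : Fin n)
    (hij : i ≠ j) : (A i ∩ A j).card = t := by
  obtain ⟨hpos, hc, hu⟩ := hF
  have hk := key t a A hc
  rw [hex, sub_self, mul_zero] at hk
  have hU := hu Finset.univ (by simpa using hn)
  have hUz : (∑ i, (a i : ℤ)) + t ≤ ((Finset.univ.biUnion A).card : ℤ) := by exact_mod_cast hU
  have hs0 : 0 ≤ ∑ i, (a i : ℤ) := Finset.sum_nonneg fun i _ => by positivity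
  have hsq : (0 : ℤ) ≤ (((Finset.univ.biUnion A).card : ℤ) - t) ^ 2 - (∑ i, (a i : ℤ)) ^ 2 := by
    nlinarith
  have hA : ∀ i j, i ≠ j → (A i ∩ A j).card ≤ t := by
    intro i j h
    have h1 := hu {i, j} (by rw [Finset.card_pair h])
    rw [Finset.sum_pair h, Finset.biUnion_insert, Finset.singleton_biUnion] at h1
    have h2 := Finset.card_union_add_card_inter (A i) (A j)
    rw [hc, hc] at h2
    omega
  have hAi := fun i => card_A A i
  rcases lt_or_ge (VV A).card t with hm | hm
  · exfalso
    have hb : comp A (VV A) (VV A) ≤ (VV A).card * (VV A).card := by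
      unfold comp
      refine (Finset.card_filter_le _ _).trans ?_
      rw [Finset.card_product]
    have hbz : (comp A (VV A) (VV A) : ℤ) ≤ (VV A).card * (VV A).card := by exact_mod_cast hb
    have hmz : ((VV A).card : ℤ) < t := by exact_mod_cast hm
    have hterm : ∀ i, ((t : ℤ) - (VV A).card) ^ 2 ≤ ((a i : ℤ) - (SS A i).card) ^ 2 := by
      intro i
      have h1 := hAi i
      rw [hc] at h1
      have h2 : (A i ∩ VV A).card ≤ (VV A).card := Finset.card_le_card Finset.inter_subset_right
      have h3 : (t : ℤ) - (VV A).card ≤ (SS A i).card - a i := by omega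
      nlinarith
    have hsum : (n : ℤ) * ((t : ℤ) - (VV A).card) ^ 2
        ≤ ∑ i, ((a i : ℤ) - (SS A i).card) ^ 2 := by
      have := Finset.sum_le_sum (s := Finset.univ) fun i _ => hterm i
      simpa using this
    have hnz : (2 : ℤ) ≤ n := by exact_mod_cast hn
    have hp : 0 < ((t : ℤ) - (VV A).card) ^ 2 := by
      have : 0 < (t : ℤ) - (VV A).card := by linarith
      positivity
    nlinarith
  · have hb := comp_bound A t hA _ hm (VV A) rfl (fun x hx => (mem_VV A x).1 hx)
    have hmz : (t : ℤ) ≤ (VV A).card := by exact_mod_cast hm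
    have hnn : 0 ≤ ∑ i, ((a i : ℤ) - (SS A i).card) ^ 2 :=
      Finset.sum_nonneg fun i _ => sq_nonneg _
    have hmt : ((VV A).card : ℤ) = t := by nlinarith
    have hz : ∑ i, ((a i : ℤ) - (SS A i).card) ^ 2 = 0 := by nlinarith
    rw [Finset.sum_eq_zero_iff_of_nonneg (fun i _ => sq_nonneg _)] at hz
    have hVt : (VV A).card = t := by exact_mod_cast hmt
    have hsub : ∀ i, VV A ⊆ A i := by
      intro i
      have h1 := hz i (Finset.mem_univ i)
      have h2 : (a i : ℤ) - (SS A i).card = 0 := by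
        exact pow_eq_zero_iff (two_ne_zero) |>.1 h1
      have h3 := hAi i
      rw [hc] at h3
      have h4 : A i ∩ VV A = VV A :=
        Finset.eq_of_subset_of_card_le Finset.inter_subset_right (by omega)
      exact Finset.inter_eq_right.1 h4
    refine le_antisymm (hA i j hij) ?_
    rw [← hVt]
    exact Finset.card_le_card (Finset.subset_inter (hsub i) (hsub j))

theorem bwd {n : ℕ} (t : ℕ) (a : Fin n → ℕ) (A : Fin n → Finset ℕ)
    (hF : IsValuedTN t a A) (hn : 2 ≤ n) (h : ∀ i j : Fin n, i ≠ j → (A i ∩ A j).card = t) :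
    (((Finset.univ.biUnion A) ×ˢ (Finset.univ.biUnion A)).filter
        (fun p => p.1 < p.2 ∧ Exclusive A p.1 p.2)).card = pairSum a := by
  obtain ⟨hpos, hc, hu⟩ := hF
  have hk := key t a A hc
  have h3 : ∀ i j k, i ≠ j → i ≠ k → j ≠ k → A i ∩ A j ⊆ A k := by
    intro i j k hij hik hjk
    have h1 := hu {i, j, k} (by rw [Finset.card_eq_three.2 ⟨i, j, k, hij, hik, hjk, rfl⟩]; omega)
    rw [Finset.sum_insert (by simp [hij, hik]), Finset.sum_pair hjk, Finset.biUnion_insert,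
      Finset.biUnion_insert, Finset.singleton_biUnion, ← Finset.union_assoc] at h1
    have e1 := Finset.card_union_add_card_inter (A i ∪ A j) (A k)
    have e2 := Finset.card_union_add_card_inter (A i) (A j)
    have e3 := Finset.card_union_add_card_inter (A i ∩ A k) (A j ∩ A k)
    rw [← Finset.union_inter_distrib_right] at e3
    rw [h i j hij, hc, hc] at e2
    rw [h i k hik, h j k hjk] at e3
    rw [hc] at e1
    have e4 : A i ∩ A k ∩ (A j ∩ A k) = A i ∩ A j ∩ A k := by
      ext x; simp only [Finset.mem_inter]; tauto
    rw [e4] at e3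
    have e5 : A i ∩ A j ∩ A k = A i ∩ A j :=
      Finset.eq_of_subset_of_card_le Finset.inter_subset_left (by rw [h i j hij]; omega)
    exact Finset.inter_eq_left.1 e5
  have hV : ∀ x ∈ VV A, ∀ k, x ∈ A k := by
    intro x hx k
    rw [mem_VV] at hx
    obtain ⟨i, hi, j, hj, hij⟩ := Finset.one_lt_card.1 hx
    rw [mem_Ix'] at hi hj
    by_cases hik : i = k
    · exact hik ▸ hi
    by_cases hjk : j = k
    · exact hjk ▸ hj
    exact h3 i j k hij hik hjk (Finset.mem_inter.2 ⟨hi, hj⟩)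
  have hVt : (VV A).card = t := by
    have hne : (⟨0, by omega⟩ : Fin n) ≠ ⟨1, by omega⟩ := by simp
    rw [← h _ _ hne]
    congr 1
    ext x
    constructor
    · intro hx
      exact Finset.mem_inter.2 ⟨hV x hx _, hV x hx _⟩
    · intro hx
      rw [Finset.mem_inter, ← mem_Ix', ← mem_Ix'] at hx
      rw [mem_VV]
      exact Finset.one_lt_card.2 ⟨_, hx.1, _, hx.2, hne⟩
  have hS : ∀ i, (SS A i).card = a i := by
    intro i
    have h1 := card_A A i
    rw [hc, Finset.inter_eq_right.2 (fun x hx => hV x hx i)] at h1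
    omega
  have hcomp : comp A (VV A) (VV A) = t * t := by
    unfold comp
    rw [Finset.filter_true_of_mem, Finset.card_product, hVt]
    intro p hp
    rw [Finset.mem_product] at hp
    left
    intro k _
    rw [mem_Ix']
    exact hV _ hp.2 k
  have hcard := card_U A
  simp only [hS, hVt] at hcard
  rw [hcomp, hcard, hVt] at hk
  simp only [hS, sub_self] at hk
  push_cast at hk
  generalize (((Finset.univ.biUnion A) ×ˢ (Finset.univ.biUnion A)).filter
        (fun p => p.1 < p.2 ∧ Exclusive A p.1 p.2)).card = E at hk ⊢
  simp only [
    Finset.sum_const_zero] at hk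
  zify
  linarith [hk]

end Aux

open scoped Classical in
theorem exclusive_pairs_eq_iff (t n : ℕ) (a : Fin n → ℕ) (A : Fin n → Finset ℕ)
    (hF : IsValuedTN t a A) :
    (((Finset.univ.biUnion A) ×ˢ (Finset.univ.biUnion A)).filter
        (fun p => p.1 < p.2 ∧ Exclusive A p.1 p.2)).card = pairSum a ↔
      ∀ i j : Fin n, i ≠ j → (A i ∩ A j).card = t := by
  rcases lt_or_ge n 2 with hn | hn
  · have hs : ∀ i j : Fin n, i = j := fun i j => Fin.ext (by omega)
    refine ⟨fun _ i j hij => absurd (hs i j) hij, fun _ => ?_⟩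
    have h1 : pairSum a = 0 := by
      unfold pairSum
      rw [Finset.filter_false_of_mem, Finset.sum_empty]
      intro p _ hp
      exact hp.ne (hs _ _)
    rw [h1, Finset.card_eq_zero, Finset.filter_eq_empty_iff]
    rintro p _ ⟨_, ⟨i, hi⟩, ⟨j, hj⟩⟩
    rw [Finset.mem_sdiff] at hi hj
    rw [hs i j] at hi
    exact hi.2 hj.1
  · exact ⟨fun h i j hij => fwd t a A hF hn h i j hij, fun h => bwd t a A hF hn h⟩
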